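/- For every integer n ≥ 2, the diameter of the space Tree(n) of labeled rooted binary trees of complexity n, in the metric of simultaneous Whitehead moves, is at most C·log(n) for a universal constant C. -/

import Mathlib

/-- A labeled rooted binary tree: leaves carry natural-number labels; an internal
node has a left and a right child subtree.  (The root edge is the edge above the
top node.) -/
inductive LTree : Type
  | leaf : ℕ → LTree
  | node : LTree → LTree → LTree
deriving DecidableEq

namespace LTree

/-- The multiset of labels at the ends of a tree. -/
def labels : LTree → Multiset ℕ
  | leaf a => {a}
  | node l r => labels l + labels r

/-- The number of ends of a tree. -/
def numEnds (t : LTree) : ℕ := (labels t).card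

/-- The `k`-th binary digit of `x`, counting from the right starting at `1`. -/
def digit (k x : ℕ) : ℕ := x / 2 ^ (k - 1) % 2

/-- All labels of `t` agree on the binary digits `k+1` through `d`. -/
def agreeAbove (d k : ℕ) (t : LTree) : Prop :=
  ∀ a ∈ labels t, ∀ b ∈ labels t, ∀ i, k < i → i ≤ d → digit i a = digit i b

/-- An edge (identified with the subtree it roots) is `k`-sorted if the digits
`k+1` through `d` of all its labels agree and either (a1) all labels have the same
`k`-th digit, or (a2) all labels with `k`-th digit `0` are ends of the left child
subtree and all labels with `k`-th digit `1` are ends of the right child subtree. -/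
def kSorted (d k : ℕ) : LTree → Prop
  | leaf a => agreeAbove d k (leaf a) ∧
      (∀ x ∈ labels (leaf a), ∀ y ∈ labels (leaf a), digit k x = digit k y)
  | node l r => agreeAbove d k (node l r) ∧
      ((∀ x ∈ labels (node l r), ∀ y ∈ labels (node l r), digit k x = digit k y) ∨
        ((∀ x ∈ labels l, digit k x = 0) ∧ (∀ x ∈ labels r, digit k x = 1)))

/-- A tree is fully-sorted if every edge `e` is `d_e`-sorted, where `d_e` is the
number of binary digits of the number of ends of `T_e`. -/
def fullySorted (d : ℕ) : LTree → Prop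
  | leaf a => kSorted d (Nat.size (numEnds (leaf a))) (leaf a)
  | node l r => kSorted d (Nat.size (numEnds (node l r))) (node l r) ∧
      fullySorted d l ∧ fullySorted d r

/-- Add `c` to every label. -/
def addLabel (c : ℕ) : LTree → LTree
  | leaf a => leaf (a + c)
  | node l r => node (addLabel c l) (addLabel c r)

/-- The canonical fully-sorted tree `T_n`: `T_0` is a single labeled end; for
`n ≥ 1`, with `m` largest such that `2^m ≤ n` and `k = n - 2^m`, the left subtree
is the full tree `T_{2^m - 1}` and the right subtree is `T_k` with `2^m` added to
all labels. -/
def Tn : ℕ → LTree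
  | 0 => leaf 0
  | n + 1 =>
      node (Tn (2 ^ Nat.log 2 (n + 1) - 1))
        (addLabel (2 ^ Nat.log 2 (n + 1)) (Tn (n + 1 - 2 ^ Nat.log 2 (n + 1))))
decreasing_by
  · have h1 : 2 ^ Nat.log 2 (n + 1) ≤ n + 1 := Nat.pow_log_le_self 2 (Nat.succ_ne_zero n)
    omega
  · have h1 : 1 ≤ 2 ^ Nat.log 2 (n + 1) := Nat.one_le_two_pow
    omega

end LTree

namespace LTree

/-- One simultaneous Whitehead move (labeled trees are considered up to root- and
label-preserving homeomorphism, so children may be swapped for free).  The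
constructors `white*` perform a Whitehead move at an interior edge (collapse and
re-expand in one of the two other directions); the recursive arguments allow
further Whitehead moves at pairwise disjoint (vertex-disjoint) interior edges,
which necessarily lie strictly inside the subtrees `a`, `b`, `c`. -/
inductive SimMove : LTree → LTree → Prop
  | leaf (a : ℕ) : SimMove (leaf a) (leaf a)
  | node {l l' r r' : LTree} : SimMove l l' → SimMove r r' →
      SimMove (node l r) (node l' r')
  | swap {l l' r r' : LTree} : SimMove l l' → SimMove r r' →
      SimMove (node l r) (node r' l')
  | whiteL1 {a a' b b' c c' : LTree} : SimMove a a' → SimMove b b' → SimMove c c' →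
      SimMove (node (node a b) c) (node (node a' c') b')
  | whiteL2 {a a' b b' c c' : LTree} : SimMove a a' → SimMove b b' → SimMove c c' →
      SimMove (node (node a b) c) (node (node b' c') a')
  | whiteR1 {a a' b b' c c' : LTree} : SimMove a a' → SimMove b b' → SimMove c c' →
      SimMove (node c (node a b)) (node b' (node a' c'))
  | whiteR2 {a a' b b' c c' : LTree} : SimMove a a' → SimMove b b' → SimMove c c' →
      SimMove (node c (node a b)) (node a' (node b' c'))

end LTree

/-!
Call *cluster* a subtree of small height. One simultaneous move merges a positive proportion of
the clusters of any tree: sibling clusters merge for free, and along a path from which single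
clusters hang, a Whitehead move on every other edge merges the clusters two by two. Hence a tree
with `m` ends is brought to height `O(log m)` in `O(log m)` moves.

Let now `t` and `u` both have height `O(log m)` and the same labels. Sort the ends of `t` along
`u`: rearrange `t` so that its two children carry the labels of the two children of `u`, and
recurse. If the children of `t` are already split this way, four moves interchange the middle
grandchildren and split `t`; done one after the other, these rearrangements would cost
`O((log m) ^ 2)` moves, but each level of `u` can be treated at a vertex of `t` four moves after
it was treated at the children, so that the recursions overlap like the stages of a pipeline.
-/

/-- `RelPow R k` is the `k`-th power of the relation `R` under composition. -/
def RelPow {α : Type*} (R : α → α → Prop) : ℕ → α → α → Prop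
  | 0 => Eq
  | k + 1 => Relation.Comp R (RelPow R k)

namespace RelPow

variable {α : Type*} {R : α → α → Prop} {j k : ℕ} {a b c : α}

theorem single (h : R a b) : RelPow R 1 a b := ⟨b, h, rfl⟩

theorem trans (h : RelPow R j a b) (h' : RelPow R k b c) : RelPow R (j + k) a c := by
  induction j generalizing a with
  | zero => obtain rfl := h; rwa [Nat.zero_add]
  | succ j ih =>
    obtain ⟨d, hd, h⟩ := h
    rw [Nat.add_right_comm]
    exact ⟨d, hd, ih h⟩

theorem refl (hR : ∀ a, R a a) (k : ℕ) (a : α) : RelPow R k a a := by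
  induction k with
  | zero => rfl
  | succ k ih => exact ⟨a, hR a, ih⟩

theorem map₂ {f : α → α → α} (hf : ∀ {a a' b b'}, R a a' → R b b' → R (f a b) (f a' b'))
    {a' b' : α} (h : RelPow R k a a') (h' : RelPow R k b b') :
    RelPow R k (f a b) (f a' b') := by
  induction k generalizing a b with
  | zero => obtain ⟨rfl, rfl⟩ := And.intro h h'; rfl
  | succ k ih =>
    obtain ⟨⟨c, hc, h⟩, ⟨d, hd, h'⟩⟩ := And.intro h h'
    exact ⟨f c d, hf hc hd, ih h h'⟩

theorem reverse (hR : ∀ {a b}, R a b → RelPow R j b a) (h : RelPow R k a b) :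
    RelPow R (j * k) b a := by
  induction k generalizing a with
  | zero => exact h.symm
  | succ k ih =>
    obtain ⟨c, hc, h⟩ := h
    exact (ih h).trans (hR hc)

theorem apply_eq {β : Type*} {f : α → β} (hf : ∀ {a b}, R a b → f a = f b)
    (h : RelPow R k a b) : f a = f b := by
  induction k generalizing a with
  | zero => exact congrArg f h
  | succ k ih =>
    obtain ⟨c, hc, h⟩ := h
    exact (hf hc).trans (ih h)

theorem exists_chain (h : RelPow R k a b) :
    ∃ f : ℕ → α, f 0 = a ∧ f k = b ∧ ∀ i < k, R (f i) (f (i + 1)) := by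
  induction k generalizing a with
  | zero => exact ⟨fun _ => a, rfl, h, by simp⟩
  | succ k ih =>
    obtain ⟨c, hc, h⟩ := h
    obtain ⟨f, rfl, hk, hf⟩ := ih h
    refine ⟨fun i => Nat.casesOn i a f, rfl, hk, ?_⟩
    rintro (_ | i) hi
    · exact hc
    · exact hf i (by omega)

theorem of_optionRel (h : RelPow (Option.Rel R) k (some a) (some b)) : RelPow R k a b := by
  induction k generalizing a with
  | zero => exact Option.some_injective _ h
  | succ k ih =>
    obtain ⟨_, ⟨hc⟩, h⟩ := h
    exact ⟨_, hc, ih h⟩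

end RelPow

namespace LTree

/-! ### Simultaneous moves -/

namespace SimMove

@[refl]
theorem refl (t : LTree) : SimMove t t := by
  induction t with
  | leaf a => exact .leaf a
  | node l r hl hr => exact .node hl hr

variable {t t' : LTree}

theorem labels_eq (h : SimMove t t') : labels t = labels t' := by
  induction h <;> simp only [labels, *] <;> abel

/-- `SimMove` itself is not symmetric, because it fixes the order of the children it creates; the
second move restores that order. -/
theorem reverse (h : SimMove t t') : RelPow SimMove 2 t' t := by
  suffices ∃ u, SimMove t' u ∧ SimMove u t by
    obtain ⟨u, hu, hu'⟩ := this
    exact ⟨u, hu, .single hu'⟩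
  induction h with
  | leaf a => exact ⟨_, .leaf a, .leaf a⟩
  | node _ _ hl hr =>
    obtain ⟨⟨u, hu, hu'⟩, ⟨v, hv, hv'⟩⟩ := And.intro hl hr
    exact ⟨_, .node hu hv, .node hu' hv'⟩
  | swap _ _ hl hr =>
    obtain ⟨⟨u, hu, hu'⟩, ⟨v, hv, hv'⟩⟩ := And.intro hl hr
    exact ⟨_, .swap hv hu, .node hu' hv'⟩
  | whiteL1 _ _ _ ha hb hc =>
    obtain ⟨⟨u, hu, hu'⟩, ⟨v, hv, hv'⟩, ⟨w, hw, hw'⟩⟩ := And.intro ha (And.intro hb hc)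
    exact ⟨_, .whiteL1 hu hw hv, .node (.node hu' hv') hw'⟩
  | whiteL2 _ _ _ ha hb hc =>
    obtain ⟨⟨u, hu, hu'⟩, ⟨v, hv, hv'⟩, ⟨w, hw, hw'⟩⟩ := And.intro ha (And.intro hb hc)
    exact ⟨_, .whiteL1 hv hw hu, .node (.swap hv' hu') hw'⟩
  | whiteR1 _ _ _ ha hb hc =>
    obtain ⟨⟨u, hu, hu'⟩, ⟨v, hv, hv'⟩, ⟨w, hw, hw'⟩⟩ := And.intro ha (And.intro hb hc)
    exact ⟨_, .whiteR1 hu hw hv, .node hw' (.node hu' hv')⟩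
  | whiteR2 _ _ _ ha hb hc =>
    obtain ⟨⟨u, hu, hu'⟩, ⟨v, hv, hv'⟩, ⟨w, hw, hw'⟩⟩ := And.intro ha (And.intro hb hc)
    exact ⟨_, .whiteR1 hv hw hu, .node hw' (.swap hv' hu')⟩

end SimMove

/-! ### Balancing -/

section Balancing

variable {r m : ℕ} {t : LTree}

/-- The height of a tree: the largest number of internal nodes on a path from the root. -/
def height : LTree → ℕ
  | leaf _ => 0
  | node l r => max (height l) (height r) + 1

/-- `Clustered r m t`: the tree `t` is a binary tree with `m` ends in which every end has been
replaced by a *cluster*, that is, a tree of height at most `r`. -/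
inductive Clustered (r : ℕ) : ℕ → LTree → Prop
  | cluster {t : LTree} : height t ≤ r → Clustered r 1 t
  | node {m₁ m₂ : ℕ} {t₁ t₂ : LTree} : Clustered r m₁ t₁ → Clustered r m₂ t₂ →
      Clustered r (m₁ + m₂) (node t₁ t₂)

/-- `Shrinks r e m t`: one simultaneous move merges the `m` clusters of height at most `r` of `t`
into `m' ≤ (3 * m - e) / 4` clusters of height at most `r + 1`. The slack `e` pays for clusters
that are left unmerged further up in the tree. -/
def Shrinks (r e m : ℕ) (t : LTree) : Prop :=
  ∃ t' m', SimMove t t' ∧ Clustered (r + 1) m' t' ∧ 4 * m' + e ≤ 3 * m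

/-- `HasTopCluster r m t`: of the `m` clusters of `t`, one is a child of the root and the others
shrink with slack `2`. The top cluster can still be merged with a cluster above it. -/
def HasTopCluster (r m : ℕ) (t : LTree) : Prop :=
  ∃ x w p, height x ≤ r ∧ Shrinks r 2 p w ∧ m = p + 1 ∧ (t = node x w ∨ t = node w x)

theorem clustered_numEnds (t : LTree) : Clustered 0 (numEnds t) t := by
  induction t with
  | leaf a => exact .cluster le_rfl
  | node l r hl hr => simpa only [numEnds, labels, Multiset.card_add] using hl.node hr

theorem Clustered.pos (h : Clustered r m t) : 0 < m := by
  induction h with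
  | cluster => exact one_pos
  | node _ _ ih₁ _ => exact Nat.add_pos_left ih₁ _

theorem Clustered.height_le (h : Clustered r m t) (hm : m ≤ 1) : height t ≤ r := by
  cases h with
  | cluster h => exact h
  | node h₁ h₂ => have := h₁.pos; have := h₂.pos; omega

theorem Clustered.cluster_succ (h : height t ≤ r) : Clustered (r + 1) 1 t :=
  .cluster (Nat.le_succ_of_le h)

theorem Clustered.pair_succ {u : LTree} (ht : height t ≤ r) (hu : height u ≤ r) :
    Clustered (r + 1) 1 (LTree.node t u) :=
  .cluster (Nat.succ_le_succ (max_le ht hu))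

theorem Shrinks.mono {e e' : ℕ} (he : e' ≤ e) (h : Shrinks r e m t) : Shrinks r e' m t := by
  obtain ⟨t', m', hs, hc, hm⟩ := h
  exact ⟨t', m', hs, hc, by omega⟩

theorem Shrinks.node {m₁ m₂ : ℕ} {t₁ t₂ : LTree} (h₁ : Shrinks r 1 m₁ t₁)
    (h₂ : Shrinks r 1 m₂ t₂) : Shrinks r 2 (m₁ + m₂) (node t₁ t₂) := by
  obtain ⟨t₁', m₁', hs₁, hc₁, hm₁⟩ := h₁
  obtain ⟨t₂', m₂', hs₂, hc₂, hm₂⟩ := h₂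
  exact ⟨_, _, .node hs₁ hs₂, .node hc₁ hc₂, by omega⟩

theorem shrinks_node_of_height_le {x y : LTree} (hx : height x ≤ r) (hy : height y ≤ r) :
    Shrinks r 2 2 (node x y) :=
  ⟨_, _, .refl _, .pair_succ hx hy, le_rfl⟩

theorem HasTopCluster.shrinks (h : HasTopCluster r m t) : Shrinks r 1 m t := by
  obtain ⟨x, w, p, hx, ⟨w', p', hs, hc, hp⟩, rfl, rfl | rfl⟩ := h
  · exact ⟨_, _, .node (.refl x) hs, .node (.cluster_succ hx) hc, by omega⟩
  · exact ⟨_, _, .node hs (.refl x), .node hc (.cluster_succ hx), by omega⟩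

theorem HasTopCluster.shrinks_node_left {y : LTree} (h : HasTopCluster r m t)
    (hy : height y ≤ r) : Shrinks r 2 (1 + m) (node y t) := by
  obtain ⟨x, w, p, hx, ⟨w', p', hs, hc, hp⟩, rfl, rfl | rfl⟩ := h
  · exact ⟨_, _, .whiteR1 (.refl x) hs (.refl y), .node hc (.pair_succ hx hy), by omega⟩
  · exact ⟨_, _, .whiteR2 hs (.refl x) (.refl y), .node hc (.pair_succ hx hy), by omega⟩

theorem HasTopCluster.shrinks_node_right {y : LTree} (h : HasTopCluster r m t)
    (hy : height y ≤ r) : Shrinks r 2 (m + 1) (node t y) := by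
  obtain ⟨x, w, p, hx, ⟨w', p', hs, hc, hp⟩, rfl, rfl | rfl⟩ := h
  · exact ⟨_, _, .whiteL1 (.refl x) hs (.refl y), .node (.pair_succ hx hy) hc, by omega⟩
  · exact ⟨_, _, .whiteL2 hs (.refl x) (.refl y), .node (.pair_succ hx hy) hc, by omega⟩

theorem Clustered.trichotomy (h : Clustered r m t) :
    (height t ≤ r ∧ m = 1) ∨ Shrinks r 2 m t ∨ HasTopCluster r m t := by
  induction h with
  | cluster h => exact .inl ⟨h, rfl⟩
  | node _ _ ih₁ ih₂ =>
    right
    have shrinks_one {m t} (h : Shrinks r 2 m t ∨ HasTopCluster r m t) : Shrinks r 1 m t :=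
      h.elim (.mono one_le_two) HasTopCluster.shrinks
    rcases ih₁ with ⟨h₁, rfl⟩ | h₁ <;> rcases ih₂ with ⟨h₂, rfl⟩ | h₂
    · exact .inl (shrinks_node_of_height_le h₁ h₂)
    · rcases h₂ with h₂ | h₂
      · exact .inr ⟨_, _, _, h₁, h₂, add_comm _ _, .inl rfl⟩
      · exact .inl (h₂.shrinks_node_left h₁)
    · rcases h₁ with h₁ | h₁
      · exact .inr ⟨_, _, _, h₂, h₁, rfl, .inr rfl⟩
      · exact .inl (h₁.shrinks_node_right h₂)
    · exact .inl ((shrinks_one h₁).node (shrinks_one h₂))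

theorem Clustered.exists_simMove (h : Clustered r m t) :
    ∃ t' m', SimMove t t' ∧ Clustered (r + 1) m' t' ∧ (m' = 1 ∨ 4 * m' ≤ 3 * m) := by
  rcases h.trichotomy with ⟨ht, rfl⟩ | ⟨t', m', hs, hc, hm⟩ | h
  · exact ⟨t, 1, .refl t, .cluster_succ ht, .inl rfl⟩
  · exact ⟨t', m', hs, hc, .inr (by omega)⟩
  · obtain ⟨t', m', hs, hc, hm⟩ := h.shrinks
    exact ⟨t', m', hs, hc, .inr (by omega)⟩

theorem Clustered.exists_balanced {j : ℕ} (h : Clustered r m t) (hm : m ≤ 2 ^ j) :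
    ∃ t', RelPow SimMove (3 * j) t t' ∧ height t' ≤ r + 3 * j := by
  induction j generalizing r m t with
  | zero => exact ⟨t, rfl, h.height_le hm⟩
  | succ j ih =>
    obtain ⟨t₁, m₁, hs₁, hc₁, hm₁⟩ := h.exists_simMove
    obtain ⟨t₂, m₂, hs₂, hc₂, hm₂⟩ := hc₁.exists_simMove
    obtain ⟨t₃, m₃, hs₃, hc₃, hm₃⟩ := hc₂.exists_simMove
    -- Three moves suffice to halve the number of clusters because `(3 / 4) ^ 3 ≤ 1 / 2`.
    have hm₃ : m₃ ≤ 2 ^ j := by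
      have : 1 ≤ 2 ^ j := Nat.one_le_two_pow
      rw [pow_succ] at hm
      omega
    obtain ⟨t', ht', hh⟩ := ih hc₃ hm₃
    exact ⟨t', ⟨t₁, hs₁, t₂, hs₂, t₃, hs₃, ht'⟩, by omega⟩

theorem exists_balanced {j : ℕ} (h : numEnds t ≤ 2 ^ j) :
    ∃ t', RelPow SimMove (3 * j) t t' ∧ height t' ≤ 3 * j := by
  simpa only [Nat.zero_add] using (clustered_numEnds t).exists_balanced h

end Balancing

/-! ### Possibly empty trees -/

/-- The possibly empty tree with two possibly empty children. The vertex of an only child is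
suppressed, so that no unary vertices arise. -/
abbrev join : Option LTree → Option LTree → Option LTree := Option.merge node

/-- Simultaneous moves of possibly empty trees. -/
abbrev OptMove : Option LTree → Option LTree → Prop := Option.Rel SimMove

namespace OptMove

theorem refl : ∀ a : Option LTree, OptMove a a
  | none => .none
  | some t => .some (.refl t)

variable {a a' b b' c c' d d' : Option LTree}

theorem join : OptMove a a' → OptMove b b' → OptMove (join a b) (LTree.join a' b')
  | .none, .none => .none
  | .none, .some hb => .some hb
  | .some ha, .none => .some ha
  | .some ha, .some hb => .some (.node ha hb)

theorem swap : OptMove a a' → OptMove b b' → OptMove (LTree.join a b) (LTree.join b' a')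
  | .none, .none => .none
  | .none, .some hb => .some hb
  | .some ha, .none => .some ha
  | .some ha, .some hb => .some (.swap ha hb)

theorem whiteL1 : OptMove a a' → OptMove b b' → OptMove c c' →
    OptMove (LTree.join (LTree.join a b) c) (LTree.join (LTree.join a' c') b')
  | .none, .none, .none => .none
  | .none, .none, .some hc => .some hc
  | .none, .some hb, .none => .some hb
  | .none, .some hb, .some hc => .some (.swap hb hc)
  | .some ha, .none, .none => .some ha
  | .some ha, .none, .some hc => .some (.node ha hc)
  | .some ha, .some hb, .none => .some (.node ha hb)
  | .some ha, .some hb, .some hc => .some (.whiteL1 ha hb hc)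

theorem whiteR1 : OptMove a a' → OptMove b b' → OptMove c c' →
    OptMove (LTree.join c (LTree.join a b)) (LTree.join b' (LTree.join a' c'))
  | .none, .none, .none => .none
  | .none, .none, .some hc => .some hc
  | .none, .some hb, .none => .some hb
  | .none, .some hb, .some hc => .some (.swap hc hb)
  | .some ha, .none, .none => .some ha
  | .some ha, .none, .some hc => .some (.swap hc ha)
  | .some ha, .some hb, .none => .some (.swap ha hb)
  | .some ha, .some hb, .some hc => .some (.whiteR1 ha hb hc)

theorem interchange (ha : RelPow OptMove 4 a a') (hb : RelPow OptMove 4 b b')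
    (hc : RelPow OptMove 4 c c') (hd : RelPow OptMove 4 d d') :
    RelPow OptMove 4 (LTree.join (LTree.join a b) (LTree.join c d))
      (LTree.join (LTree.join a' c') (LTree.join b' d')) := by
  obtain ⟨a₁, ha₁, a₂, ha₂, a₃, ha₃, _, ha₄, rfl⟩ := ha
  obtain ⟨b₁, hb₁, b₂, hb₂, b₃, hb₃, _, hb₄, rfl⟩ := hb
  obtain ⟨c₁, hc₁, c₂, hc₂, c₃, hc₃, _, hc₄, rfl⟩ := hc
  obtain ⟨d₁, hd₁, d₂, hd₂, d₃, hd₃, _, hd₄, rfl⟩ := hd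
  -- `(ab)(cd) → (a(cd))b → (d(ca))b → (db)(ca) → (ac)(bd)`
  exact ⟨_, whiteL1 ha₁ hb₁ (hc₁.join hd₁), _, (whiteR1 hc₂ hd₂ ha₂).join hb₂,
    _, whiteL1 hd₃ (hc₃.join ha₃) hb₃, _, (hd₄.swap hb₄).swap (hc₄.swap ha₄), rfl⟩

end OptMove

/-! ### Pipelined sorting -/

section Sorting

variable {S : Multiset ℕ} {s : ℕ} {t u : LTree} {a : Option LTree}

/-- The possibly empty tree obtained from `u` by deleting the ends whose labels are not in `S`. -/
def restrict (S : Multiset ℕ) : LTree → Option LTree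
  | leaf x => if x ∈ S then some (leaf x) else none
  | node l r => join (restrict S l) (restrict S r)

/-- `Sortable S s u a`: the possibly empty tree `a`, with labels in `S`, can be sorted along `u`
in such a way that after `s` moves `a` is split according to the children of `u`, and thereafter
each level of `u` takes four moves. The bound `s` refers to the top level only: this is what lets
the sorting of the lower levels overlap with the moves that are made above them. -/
def Sortable (S : Multiset ℕ) : ℕ → LTree → Option LTree → Prop
  | _, leaf x, a => a = restrict S (leaf x)
  | s, node l r, a =>
      ∃ a₀ a₁, RelPow OptMove s a (join a₀ a₁) ∧ Sortable S 4 l a₀ ∧ Sortable S 4 r a₁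

theorem restrict_eq_some_self (h : labels u ⊆ S) : restrict S u = some u := by
  induction u with
  | leaf x => exact if_pos (h (Multiset.mem_singleton_self x))
  | node l r hl hr =>
    have hl : restrict S l = some l := hl fun _ hx => h (Multiset.mem_add.mpr (.inl hx))
    have hr : restrict S r = some r := hr fun _ hx => h (Multiset.mem_add.mpr (.inr hx))
    simp only [restrict, hl, hr, join, Option.merge_some_some]

theorem restrict_eq_none (h : Disjoint (labels u) S) : restrict S u = none := by
  induction u with
  | leaf x => exact if_neg (Multiset.disjoint_left.mp h (Multiset.mem_singleton_self x))
  | node l r hl hr =>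
    obtain ⟨h₁, h₂⟩ := Multiset.disjoint_add_left.mp h
    simp only [restrict, hl h₁, hr h₂, join, Option.merge_none_left]

theorem restrict_singleton (hu : (labels u).Nodup) {x : ℕ} (hx : x ∈ labels u) :
    restrict {x} u = some (leaf x) := by
  induction u with
  | leaf y => obtain rfl := Multiset.mem_singleton.mp hx; simp [restrict]
  | node l r hl hr =>
    obtain ⟨hul, hur, hlr⟩ := Multiset.nodup_add.mp hu
    rcases Multiset.mem_add.mp hx with hx | hx
    · have hr : restrict {x} r = none :=
        restrict_eq_none (Multiset.disjoint_singleton.mpr (Multiset.disjoint_left.mp hlr hx))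
      simp only [restrict, hl hul hx, hr, join, Option.merge_none_right]
    · have hl : restrict {x} l = none :=
        restrict_eq_none (Multiset.disjoint_singleton.mpr (Multiset.disjoint_right.mp hlr hx))
      simp only [restrict, hr hur hx, hl, join, Option.merge_none_left]

theorem sortable_restrict (S : Multiset ℕ) (s : ℕ) (u : LTree) :
    Sortable S s u (restrict S u) := by
  induction u generalizing s with
  | leaf x => rfl
  | node l r hl hr => exact ⟨_, _, .refl OptMove.refl s _, hl 4, hr 4⟩

theorem Sortable.exists_relPow (h : Sortable S s u a) :
    ∃ a', RelPow OptMove s a a' ∧ Sortable S 0 u a' := by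
  cases u with
  | leaf x => exact ⟨a, .refl OptMove.refl s a, h⟩
  | node l r =>
    obtain ⟨a₀, a₁, ha, h₀, h₁⟩ := h
    exact ⟨_, ha, a₀, a₁, rfl, h₀, h₁⟩

theorem Sortable.relPow_restrict {d : ℕ} (h : Sortable S s u a) (hu : height u ≤ d) :
    RelPow OptMove (s + 4 * d) a (restrict S u) := by
  induction u generalizing s d a with
  | leaf x => exact h ▸ .refl OptMove.refl _ _
  | node l r hl hr =>
    obtain ⟨a₀, a₁, ha, h₀, h₁⟩ := h
    obtain ⟨d, rfl⟩ := Nat.exists_eq_add_one.mpr (Nat.zero_lt_of_lt hu)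
    obtain ⟨hul, hur⟩ := max_le_iff.mp (Nat.le_of_succ_le_succ hu)
    rw [Nat.mul_succ, add_comm (4 * d)]
    exact ha.trans (.map₂ OptMove.join (hl h₀ hul) (hr h₁ hur))

theorem Sortable.join {S₁ S₂ : Multiset ℕ} (hS : Disjoint S₁ S₂) {b : Option LTree}
    (ha : Sortable S₁ s u a) (hb : Sortable S₂ s u b) :
    Sortable (S₁ + S₂) (s + 4) u (join a b) := by
  induction u generalizing s a b with
  | leaf x =>
    obtain ⟨rfl, rfl⟩ := And.intro ha hb
    have hx : x ∈ S₁ → x ∉ S₂ := fun hx => Multiset.disjoint_left.mp hS hx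
    by_cases h₁ : x ∈ S₁ <;> by_cases h₂ : x ∈ S₂ <;> simp_all [Sortable, restrict]
  | node l r hl hr =>
    obtain ⟨a₀, a₁, ha, ha₀, ha₁⟩ := ha
    obtain ⟨b₀, b₁, hb, hb₀, hb₁⟩ := hb
    obtain ⟨a₀', ia₀, ha₀⟩ := ha₀.exists_relPow
    obtain ⟨a₁', ia₁, ha₁⟩ := ha₁.exists_relPow
    obtain ⟨b₀', ib₀, hb₀⟩ := hb₀.exists_relPow
    obtain ⟨b₁', ib₁, hb₁⟩ := hb₁.exists_relPow
    have hab := (RelPow.map₂ OptMove.join ha hb).trans (OptMove.interchange ia₀ ia₁ ib₀ ib₁)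
    exact ⟨_, _, hab, hl ha₀ hb₀, hr ha₁ hb₁⟩

theorem sortable_labels {h : ℕ} (hh : height t ≤ h) (ht : (labels t).Nodup)
    (hu : (labels u).Nodup) (htu : labels t ⊆ labels u) :
    Sortable (labels t) (4 * h) u (some t) := by
  induction t generalizing h with
  | leaf x =>
    rw [← restrict_singleton hu (htu (Multiset.mem_singleton_self x))]
    exact sortable_restrict {x} _ u
  | node l r hl hr =>
    obtain ⟨h, rfl⟩ := Nat.exists_eq_add_one.mpr (Nat.zero_lt_of_lt hh)
    obtain ⟨hhl, hhr⟩ := max_le_iff.mp (Nat.le_of_succ_le_succ hh)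
    obtain ⟨htl, htr, hlr⟩ := Multiset.nodup_add.mp ht
    have hlu : labels l ⊆ labels u := fun _ hx => htu (Multiset.mem_add.mpr (.inl hx))
    have hru : labels r ⊆ labels u := fun _ hx => htu (Multiset.mem_add.mpr (.inr hx))
    exact (hl hhl htl hlu).join hlr (hr hhr htr hru)

theorem relPow_simMove_of_height_le {d : ℕ} (ht : height t ≤ d) (hu : height u ≤ d)
    (hnd : (labels t).Nodup) (htu : labels t = labels u) : RelPow SimMove (8 * d) t u := by
  have hsort : Sortable (labels t) (4 * d) u (some t) :=
    sortable_labels ht hnd (htu ▸ hnd) (Multiset.subset_of_le htu.le)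
  have hmoves := hsort.relPow_restrict hu
  rw [restrict_eq_some_self (Multiset.subset_of_le htu.ge), ← add_mul] at hmoves
  exact hmoves.of_optionRel

end Sorting

theorem relPow_simMove_of_numEnds_le {j : ℕ} {t t' : LTree} (hj : numEnds t ≤ 2 ^ j)
    (hnd : (labels t).Nodup) (h : labels t = labels t') : RelPow SimMove (33 * j) t t' := by
  obtain ⟨u, htu, hu⟩ := exists_balanced hj
  obtain ⟨u', htu', hu'⟩ := exists_balanced (t := t') (j := j) (by rwa [numEnds, ← h])
  have hlu : labels t = labels u := htu.apply_eq SimMove.labels_eq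
  have hlu' : labels t' = labels u' := htu'.apply_eq SimMove.labels_eq
  have huu' : RelPow SimMove (8 * (3 * j)) u u' :=
    relPow_simMove_of_height_le hu hu' (hlu ▸ hnd) (by rw [← hlu, h, hlu'])
  have hu't' : RelPow SimMove (2 * (3 * j)) u' t' := htu'.reverse SimMove.reverse
  convert (htu.trans huu').trans hu't' using 1
  ring

end LTree

theorem natLog_two_add_one_le {n : ℕ} (hn : 2 ≤ n) :
    (Nat.log 2 n + 1 : ℝ) ≤ 3 * Real.log n := by
  have hlog : (Nat.log 2 n : ℝ) * Real.log 2 ≤ Real.log n := by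
    rw [← le_div_iff₀ (Real.log_pos one_lt_two)]
    exact Real.natLog_le_logb n 2
  have hone : (1 : ℝ) ≤ Nat.log 2 n := mod_cast Nat.log_pos one_lt_two hn
  nlinarith [Real.log_two_gt_d9]

open LTree in
theorem stmt7_general : ∃ C : ℝ, 0 < C ∧ ∀ n : ℕ, 2 ≤ n → ∀ t t' : LTree,
    numEnds t = n + 1 → (labels t).Nodup → labels t = labels t' →
    ∃ k : ℕ, (k : ℝ) ≤ C * Real.log n ∧
      ∃ f : ℕ → LTree, f 0 = t ∧ f k = t' ∧ ∀ i < k, SimMove (f i) (f (i + 1)) := by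
  refine ⟨99, by norm_num, fun n hn t t' ht hnd h => ⟨33 * (Nat.log 2 n + 1), ?_, ?_⟩⟩
  · push_cast
    linarith [natLog_two_add_one_le hn]
  · have hends : numEnds t ≤ 2 ^ (Nat.log 2 n + 1) :=
      ht.trans_le (Nat.lt_pow_succ_log_self one_lt_two n)
    exact (relPow_simMove_of_numEnds_le hends hnd h).exists_chain

open LTree in
/-- There is a universal constant `C` such that for every `n ≥ 2`, any two labeled
rooted binary trees of complexity `n` (ends labeled bijectively by `{0, …, n}`)
are connected by a chain of at most `C * log n` simultaneous Whitehead moves: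
the diameter of `Tree(n)` in the metric `d_S` is `O(log n)`. -/
theorem stmt7 : ∃ C : ℝ, 0 < C ∧ ∀ n : ℕ, 2 ≤ n → ∀ t t' : LTree,
    labels t = Multiset.range (n + 1) → labels t' = Multiset.range (n + 1) →
    ∃ k : ℕ, (k : ℝ) ≤ C * Real.log n ∧
      ∃ f : ℕ → LTree, f 0 = t ∧ f k = t' ∧ ∀ i < k, SimMove (f i) (f (i + 1)) := by
  obtain ⟨C, hC, h⟩ := stmt7_general
  exact ⟨C, hC, fun n hn t t' ht ht' =>
    h n hn t t' (by simp [numEnds, ht]) (ht ▸ Multiset.nodup_range _) (ht.trans ht'.symm)⟩
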